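/- Under hypotheses (i) and (ii), define A := (1/n)·Σ_ν γ^ν·γ_ν (sum over ν ∈ Fin n). Then for all β, ν ∈ Fin n one has A·σ^{βν} = (1/4)·[γ^β, γ^ν]. -/

import Mathlib

/-!
Write `γ_μ = ∑ ρ, ginv μ ρ • γ ρ` for the lowered family. Eliminating `σ γ` in favour of `γ σ`
by the constancy condition turns complete antisymmetry into
`2 γ^μ σ^{sb} + 2 γ^s σ^{μb} = 2 g^{μs} γ^b - g^{μb} γ^s - g^{sb} γ^μ` (`gamma_sigma_symm`).
Contracting `μ` with `s` yields `2 γ_μ σ^{μb} = (n - 1) γ^b` (`contraction`).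
Multiplying the same identity by `γ_μ` on the left and summing over `μ` produces `2 n A σ^{sb}`
together with `2 γ_μ γ^s σ^{μb}`. In the latter the constancy condition moves `γ^s` to the right of
`σ^{μb}`, after which the contraction formula applies. The outcome is
`2 A σ^{sb} = g^{sb} A - γ^b γ^s`, and its part antisymmetric in `s, b` is the claim.
-/

open Matrix BigOperators

/-- A left inverse of a symmetric array is symmetric. -/
lemma ginv_symm {n : ℕ} {g ginv : Fin n → Fin n → ℂ}
    (hg_symm : ∀ μ ν, g μ ν = g ν μ)
    (hg_inv' : ∀ μ ν, ∑ κ, ginv μ κ * g κ ν = if μ = ν then (1 : ℂ) else 0)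
    (μ ν : Fin n) : ginv μ ν = ginv ν μ := by
  have h1 : Matrix.of ginv * Matrix.of g = 1 := by
    ext a b
    simp [Matrix.mul_apply, Matrix.one_apply, hg_inv']
  have h2 : Matrix.of g * (Matrix.of ginv)ᵀ = 1 := by
    have h3 : (Matrix.of g)ᵀ = Matrix.of g := by
      ext a b
      exact hg_symm b a
    rw [← h3, ← Matrix.transpose_mul, h1, Matrix.transpose_one]
  exact Matrix.ext_iff.mpr (left_inv_eq_right_inv h1 h2) μ ν

section

variable {n N : ℕ} {g ginv : Fin n → Fin n → ℂ}
  {γ : Fin n → Matrix (Fin N) (Fin N) ℂ} {σ : Fin n → Fin n → Matrix (Fin N) (Fin N) ℂ}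

lemma gamma_sigma_symm
    (hg_symm : ∀ μ ν, g μ ν = g ν μ)
    (hconst : ∀ μ s b, σ s b * γ μ - γ μ * σ s b = g μ b • γ s - g μ s • γ b)
    (hanti : ∀ μ s b, (γ μ * σ s b + σ s b * γ μ) + (γ s * σ μ b + σ μ b * γ s) = 0)
    (μ s b : Fin n) :
    (2 : ℂ) • (γ μ * σ s b) + (2 : ℂ) • (γ s * σ μ b)
      = (2 : ℂ) • g μ s • γ b - g μ b • γ s - g s b • γ μ := by
  have h1 := hconst μ s b
  have h2 := hconst s μ b
  rw [hg_symm s μ] at h2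
  linear_combination (norm := module) hanti μ s b - h1 - h2

/-- Raising the index of the lowered family returns the original one. -/
lemma raise_lower
    (hg_symm : ∀ μ ν, g μ ν = g ν μ)
    (hg_inv : ∀ μ ν, ∑ κ, g μ κ * ginv κ ν = if μ = ν then (1 : ℂ) else 0)
    (b : Fin n) : ∑ μ, g μ b • ∑ ρ, ginv μ ρ • γ ρ = γ b := by
  simp_rw [Finset.smul_sum, smul_smul]
  rw [Finset.sum_comm]
  simp_rw [← Finset.sum_smul, fun μ => hg_symm μ b, hg_inv]
  simp

lemma contraction
    (hg_symm : ∀ μ ν, g μ ν = g ν μ)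
    (hg_inv : ∀ μ ν, ∑ κ, g μ κ * ginv κ ν = if μ = ν then (1 : ℂ) else 0)
    (hg_inv' : ∀ μ ν, ∑ κ, ginv μ κ * g κ ν = if μ = ν then (1 : ℂ) else 0)
    (hconst : ∀ μ s b, σ s b * γ μ - γ μ * σ s b = g μ b • γ s - g μ s • γ b)
    (hanti : ∀ μ s b, (γ μ * σ s b + σ s b * γ μ) + (γ s * σ μ b + σ μ b * γ s) = 0)
    (b : Fin n) :
    (2 : ℂ) • ∑ μ, (∑ ρ, ginv μ ρ • γ ρ) * σ μ b = ((n : ℂ) - 1) • γ b := by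
  have hs := ginv_symm hg_symm hg_inv'
  have T2 : ∑ μ, ∑ s, ginv μ s • (γ s * σ μ b)
      = ∑ μ, (∑ ρ, ginv μ ρ • γ ρ) * σ μ b := by
    simp_rw [Finset.sum_mul, smul_mul_assoc]
  have T1 : ∑ μ, ∑ s, ginv μ s • (γ μ * σ s b)
      = ∑ μ, (∑ ρ, ginv μ ρ • γ ρ) * σ μ b := by
    rw [Finset.sum_comm, ← T2]
    refine Finset.sum_congr rfl fun s _ => Finset.sum_congr rfl fun μ _ => ?_
    rw [hs]
  have T3 : ∑ μ, ∑ s, ginv μ s • g μ s • γ b = (n : ℂ) • γ b := by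
    have h : ∀ μ, ∑ s, ginv μ s * g μ s = 1 := fun μ => by
      simp_rw [hg_symm μ, hg_inv', if_true]
    simp_rw [smul_smul, ← Finset.sum_smul, h]
    simp
  have T4 : ∑ μ, ∑ s, ginv μ s • g μ b • γ s = γ b := by
    rw [← raise_lower (γ := γ) hg_symm hg_inv b]
    simp_rw [Finset.smul_sum]
    refine Finset.sum_congr rfl fun s _ => Finset.sum_congr rfl fun μ _ => ?_
    rw [smul_comm]
  have T5 : ∑ μ, ∑ s, ginv μ s • g s b • γ μ = γ b := by
    simp_rw [smul_smul, ← Finset.sum_smul, hg_inv']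
    simp
  have key : ∑ μ, ∑ s, ginv μ s • ((2 : ℂ) • (γ μ * σ s b) + (2 : ℂ) • (γ s * σ μ b))
      = ∑ μ, ∑ s, ginv μ s • ((2 : ℂ) • g μ s • γ b - g μ b • γ s - g s b • γ μ) := by
    simp_rw [gamma_sigma_symm hg_symm hconst hanti]
  simp_rw [smul_add, smul_sub, smul_comm _ (2 : ℂ), Finset.sum_add_distrib,
    Finset.sum_sub_distrib, ← Finset.smul_sum, T1, T2, T3, T4, T5] at key
  linear_combination (norm := module) (1 / 2 : ℂ) • key

end

theorem stmt_7
    (n N : ℕ) (hn : 1 ≤ n) (hN : 1 ≤ N)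
    (g ginv : Fin n → Fin n → ℂ)
    (hg_symm : ∀ μ ν, g μ ν = g ν μ)
    (hg_inv : ∀ μ ν, ∑ κ, g μ κ * ginv κ ν = if μ = ν then (1 : ℂ) else 0)
    (hg_inv' : ∀ μ ν, ∑ κ, ginv μ κ * g κ ν = if μ = ν then (1 : ℂ) else 0)
    (γ : Fin n → Matrix (Fin N) (Fin N) ℂ)
    (σ : Fin n → Fin n → Matrix (Fin N) (Fin N) ℂ)
    (hσ_anti : ∀ α β, σ α β = - σ β α)
    (hconst : ∀ μ s b, σ s b * γ μ - γ μ * σ s b = g μ b • γ s - g μ s • γ b)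
    (hanti : ∀ μ s b, (γ μ * σ s b + σ s b * γ μ) + (γ s * σ μ b + σ μ b * γ s) = 0)
    (A : Matrix (Fin N) (Fin N) ℂ)
    (hA : A = ((1 : ℂ) / n) • ∑ ν, γ ν * (∑ ρ, ginv ν ρ • γ ρ)) :
    ∀ β ν : Fin n,
      A * σ β ν = ((1 : ℂ) / 4) • (γ β * γ ν - γ ν * γ β) := by
  have hs := ginv_symm hg_symm hg_inv'
  have hn0 : (n : ℂ) ≠ 0 := by exact_mod_cast (by omega : n ≠ 0)
  -- `γ^μ γ_μ = γ_μ γ^μ`, by symmetry of the inverse metric.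
  have hA' : ∑ μ, (∑ ρ, ginv μ ρ • γ ρ) * γ μ = (n : ℂ) • A := by
    rw [hA, smul_smul, mul_one_div_cancel hn0, one_smul]
    simp_rw [Finset.sum_mul, Finset.mul_sum, smul_mul_assoc, mul_smul_comm]
    rw [Finset.sum_comm]
    refine Finset.sum_congr rfl fun s _ => Finset.sum_congr rfl fun μ _ => ?_
    rw [hs]
  have main : ∀ s b, (2 : ℂ) • (A * σ s b) = g s b • A - γ b * γ s := by
    intro s b
    have hC := contraction hg_symm hg_inv hg_inv' hconst hanti b
    have hR := fun c => raise_lower (γ := γ) hg_symm hg_inv c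
    set l : Fin n → Matrix (Fin N) (Fin N) ℂ := fun μ => ∑ ρ, ginv μ ρ • γ ρ with hl
    change ∑ μ, l μ * γ μ = _ at hA'
    change (2 : ℂ) • ∑ μ, l μ * σ μ b = _ at hC
    change ∀ c, ∑ μ, g μ c • l μ = γ c at hR
    -- The constancy condition eliminates `γ^s σ^{μb}` from the symmetrised identity.
    have h1 : ∀ μ, (2 : ℂ) • (γ μ * σ s b) + (2 : ℂ) • (σ μ b * γ s)
        = g s b • γ μ - g μ b • γ s := by
      intro μ
      have h2 := gamma_sigma_symm hg_symm hconst hanti μ s b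
      have h3 := hconst s μ b
      rw [hg_symm s μ] at h3
      linear_combination (norm := module) h2 + (2 : ℂ) • h3
    have h4 : ∑ μ, l μ * ((2 : ℂ) • (γ μ * σ s b) + (2 : ℂ) • (σ μ b * γ s))
        = ∑ μ, l μ * (g s b • γ μ - g μ b • γ s) := by
      simp_rw [h1]
    simp_rw [mul_add, mul_sub, mul_smul_comm, ← mul_assoc, Finset.sum_add_distrib,
      Finset.sum_sub_distrib, ← Finset.smul_sum, ← smul_mul_assoc, ← Finset.sum_mul, hA', hR,
      ← smul_mul_assoc, hC, smul_mul_assoc] at h4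
    have h5 : (n : ℂ) • ((2 : ℂ) • (A * σ s b)) = (n : ℂ) • (g s b • A - γ b * γ s) := by
      linear_combination (norm := module) h4
    exact smul_right_injective _ hn0 h5
  intro β ν
  have h1 := main β ν
  have h2 := main ν β
  rw [hσ_anti ν β, mul_neg, hg_symm ν β] at h2
  linear_combination (norm := module) (1 / 4 : ℂ) • h1 - (1 / 4 : ℂ) • h2
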